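/- Let A ∈ ℝ^{n×n} be nonsingular, 1 ≤ k ≤ d(A) − 1, and let b ∈ ℝ^n be a unit norm vector whose k-th GMRES residual r_k = GMRES(A, b, k) is nonzero. Then for every polynomial q ∈ π_k one has ‖r_k‖² = ⟨b, r_k⟩ = ⟨b, q(Aᵀ)r_k⟩ ≤ ‖q(Aᵀ)r_k‖. -/

import Mathlib

open Polynomial Matrix

/-- The Euclidean norm of a real vector. -/
noncomputable def euclNorm {ι : Type*} [Fintype ι] (v : ι → ℝ) : ℝ :=
  Real.sqrt (∑ i, v i ^ 2)

/-- The Euclidean norm of a complex vector. -/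
noncomputable def euclNormC {ι : Type*} [Fintype ι] (v : ι → ℂ) : ℝ :=
  Real.sqrt (∑ i, ‖v i‖ ^ 2)

/-- The Euclidean inner product of two real vectors. -/
noncomputable def edot {ι : Type*} [Fintype ι] (u v : ι → ℝ) : ℝ := ∑ i, u i * v i

/-- `p ∈ π_k`: real polynomials of degree at most `k` with value `1` at the origin. -/
def IsPik (k : ℕ) (p : Polynomial ℝ) : Prop := p.natDegree ≤ k ∧ p.eval 0 = 1

/-- `p ∈ π_{k,ℂ}`: complex polynomials of degree at most `k` with value `1` at the origin. -/
def IsPikC (k : ℕ) (p : Polynomial ℂ) : Prop := p.natDegree ≤ k ∧ p.eval 0 = 1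

/-- The `k`-th GMRES residual norm `min_{p ∈ π_k} ‖p(A)v‖`. -/
noncomputable def gmresVal {ι : Type*} [Fintype ι] [DecidableEq ι]
    (A : Matrix ι ι ℝ) (k : ℕ) (v : ι → ℝ) : ℝ :=
  sInf {s : ℝ | ∃ p : Polynomial ℝ, IsPik k p ∧ s = euclNorm ((Polynomial.aeval A p).mulVec v)}

/-- The `k`-th worst-case GMRES approximation `Ψ_k(A) = max_{‖v‖=1} min_{p ∈ π_k} ‖p(A)v‖`. -/
noncomputable def Psi {ι : Type*} [Fintype ι] [DecidableEq ι]
    (A : Matrix ι ι ℝ) (k : ℕ) : ℝ :=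
  sSup {r : ℝ | ∃ v : ι → ℝ, euclNorm v = 1 ∧ r = gmresVal A k v}

/-- `d(A)`: the degree of the minimal polynomial of `A`. -/
noncomputable def dA {ι : Type*} [Fintype ι] [DecidableEq ι] (A : Matrix ι ι ℝ) : ℕ :=
  (minpoly ℝ A).natDegree

/-- `d(A,b)`: the smallest degree of a nonzero polynomial `q` with `q(A)b = 0`. -/
noncomputable def dAb {ι : Type*} [Fintype ι] [DecidableEq ι]
    (A : Matrix ι ι ℝ) (b : ι → ℝ) : ℕ :=
  sInf {d : ℕ | ∃ q : Polynomial ℝ, q ≠ 0 ∧ q.natDegree = d ∧ (Polynomial.aeval A q).mulVec b = 0}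

/-- `r = GMRES(A,b,k)`: `r = p(A)b` for some `p ∈ π_k` minimizing `‖p(A)b‖` over `π_k`. -/
def IsGmresRes {ι : Type*} [Fintype ι] [DecidableEq ι]
    (A : Matrix ι ι ℝ) (k : ℕ) (b r : ι → ℝ) : Prop :=
  ∃ p : Polynomial ℝ, IsPik k p ∧ r = (Polynomial.aeval A p).mulVec b ∧
    ∀ q : Polynomial ℝ, IsPik k q → euclNorm r ≤ euclNorm ((Polynomial.aeval A q).mulVec b)

/-- `p` is the `k`-th GMRES polynomial of `A` and `b`: `p ∈ π_k` minimizes `‖p(A)b‖`. -/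
def IsGmresPoly {ι : Type*} [Fintype ι] [DecidableEq ι]
    (A : Matrix ι ι ℝ) (k : ℕ) (b : ι → ℝ) (p : Polynomial ℝ) : Prop :=
  IsPik k p ∧ ∀ q : Polynomial ℝ, IsPik k q →
    euclNorm ((Polynomial.aeval A p).mulVec b) ≤ euclNorm ((Polynomial.aeval A q).mulVec b)

/-- The Krylov subspace `K_k(A,b) = span{b, Ab, …, A^{k-1}b}`. -/
noncomputable def krylov {ι : Type*} [Fintype ι] [DecidableEq ι]
    (A : Matrix ι ι ℝ) (k : ℕ) (b : ι → ℝ) : Submodule ℝ (ι → ℝ) :=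
  Submodule.span ℝ (Set.range fun i : Fin k => (A ^ (i : ℕ)).mulVec b)

/-- `b` satisfies the cross equality for `A` and step `k`. -/
def CrossEq {ι : Type*} [Fintype ι] [DecidableEq ι]
    (A : Matrix ι ι ℝ) (k : ℕ) (b : ι → ℝ) : Prop :=
  ∀ r s : ι → ℝ, IsGmresRes A k b r → IsGmresRes Aᵀ k ((euclNorm r)⁻¹ • r) s →
    b = (euclNorm s)⁻¹ • s

/-- The Krylov matrix `K(v) = [Av, A²v, …, A^k v]`. -/
noncomputable def Kmat {n : ℕ} (A : Matrix (Fin n) (Fin n) ℝ) (k : ℕ) (v : Fin n → ℝ) :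
    Matrix (Fin n) (Fin k) ℝ :=
  Matrix.of fun i j => (A ^ ((j : ℕ) + 1)).mulVec v i

/-- `γ(v) = (K(v)ᵀK(v))⁻¹ K(v)ᵀ v`. -/
noncomputable def gammaVec {n : ℕ} (A : Matrix (Fin n) (Fin n) ℝ) (k : ℕ) (v : Fin n → ℝ) :
    Fin k → ℝ :=
  ((Kmat A k v)ᵀ * Kmat A k v)⁻¹ *ᵥ ((Kmat A k v)ᵀ *ᵥ v)

/-- `g(v) = min_{c ∈ ℝ^k} ‖v - K(v)c‖²`. -/
noncomputable def gFun {n : ℕ} (A : Matrix (Fin n) (Fin n) ℝ) (k : ℕ) (v : Fin n → ℝ) : ℝ :=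
  sInf {s : ℝ | ∃ c : Fin k → ℝ, s = euclNorm (v - Kmat A k v *ᵥ c) ^ 2}

/-- `p(z; c) = 1 - ∑_{j=1}^k c_j z^j`. -/
noncomputable def pPoly {k : ℕ} (c : Fin k → ℝ) : Polynomial ℝ :=
  1 - ∑ j : Fin k, Polynomial.C (c j) * Polynomial.X ^ ((j : ℕ) + 1)

/-- `f(c,v) = ‖p(A;c)v‖²`. -/
noncomputable def fFun {n k : ℕ} (A : Matrix (Fin n) (Fin n) ℝ) (c : Fin k → ℝ)
    (v : Fin n → ℝ) : ℝ :=
  euclNorm ((Polynomial.aeval A (pPoly c)).mulVec v) ^ 2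

/-- `F(c,v) = f(c,v)/(vᵀv)`. -/
noncomputable def FFun {n k : ℕ} (A : Matrix (Fin n) (Fin n) ℝ) (c : Fin k → ℝ)
    (v : Fin n → ℝ) : ℝ :=
  fFun A c v / edot v v

/-- The Toh matrix `A(ω, ε)`. -/
noncomputable def tohMatrix (ω ε : ℝ) : Matrix (Fin 4) (Fin 4) ℝ :=
  !![1, ε, 0, 0; 0, -1, ω / ε, 0; 0, 0, 1, ε; 0, 0, 0, -1]

/-- `p` is a `k`-th worst-case GMRES polynomial of `A`. -/
def IsWCPoly {ι : Type*} [Fintype ι] [DecidableEq ι]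
    (A : Matrix ι ι ℝ) (k : ℕ) (p : Polynomial ℝ) : Prop :=
  IsPik k p ∧ ∃ b : ι → ℝ, euclNorm b = 1 ∧
    (∀ q : Polynomial ℝ, IsPik k q →
      euclNorm ((Polynomial.aeval A p).mulVec b) ≤ euclNorm ((Polynomial.aeval A q).mulVec b)) ∧
    euclNorm ((Polynomial.aeval A p).mulVec b) = Psi A k

/-- The spectral (Euclidean operator) norm of a real matrix. -/
noncomputable def specNorm {ι : Type*} [Fintype ι] (M : Matrix ι ι ℝ) : ℝ :=
  sSup {r : ℝ | ∃ v : ι → ℝ, euclNorm v = 1 ∧ r = euclNorm (M *ᵥ v)}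

/-- The `k`-th ideal GMRES approximation `φ_k(A) = min_{p ∈ π_k} ‖p(A)‖`. -/
noncomputable def phiIdeal {ι : Type*} [Fintype ι] [DecidableEq ι]
    (A : Matrix ι ι ℝ) (k : ℕ) : ℝ :=
  sInf {r : ℝ | ∃ p : Polynomial ℝ, IsPik k p ∧ r = specNorm (Polynomial.aeval A p)}

/-- Complexification of a real matrix. -/
noncomputable def matC {ι : Type*} (A : Matrix ι ι ℝ) : Matrix ι ι ℂ :=
  A.map fun x => (x : ℂ)

/-- Complexification of a real vector. -/
noncomputable def vecC {ι : Type*} (b : ι → ℝ) : ι → ℂ := fun i => (b i : ℂ)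

/-- `Ψ_{k,ℂ,ℝ}(A)`: complex polynomials, real initial vectors. -/
noncomputable def PsiCR {ι : Type*} [Fintype ι] [DecidableEq ι]
    (A : Matrix ι ι ℝ) (k : ℕ) : ℝ :=
  sSup {r : ℝ | ∃ b : ι → ℝ, euclNorm b = 1 ∧
    r = sInf {s : ℝ | ∃ p : Polynomial ℂ, IsPikC k p ∧
      s = euclNormC ((Polynomial.aeval (matC A) p).mulVec (vecC b))}}

/-- `Ψ_{k,ℂ,ℂ}(A)`: complex polynomials, complex initial vectors. -/
noncomputable def PsiCC {ι : Type*} [Fintype ι] [DecidableEq ι]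
    (A : Matrix ι ι ℝ) (k : ℕ) : ℝ :=
  sSup {r : ℝ | ∃ b : ι → ℂ, euclNormC b = 1 ∧
    r = sInf {s : ℝ | ∃ p : Polynomial ℂ, IsPikC k p ∧
      s = euclNormC ((Polynomial.aeval (matC A) p).mulVec b)}}

/-- `Ψ_{k,ℝ,ℂ}(A)`: real polynomials, complex initial vectors. -/
noncomputable def PsiRC {ι : Type*} [Fintype ι] [DecidableEq ι]
    (A : Matrix ι ι ℝ) (k : ℕ) : ℝ :=
  sSup {r : ℝ | ∃ b : ι → ℂ, euclNormC b = 1 ∧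
    r = sInf {s : ℝ | ∃ p : Polynomial ℝ, IsPik k p ∧
      s = euclNormC ((Polynomial.aeval (matC A) (p.map (algebraMap ℝ ℂ))).mulVec b)}}

/-- `φ_{k,ℝ,ℝ}(A)`. -/
noncomputable def phiRR {ι : Type*} [Fintype ι] [DecidableEq ι]
    (A : Matrix ι ι ℝ) (k : ℕ) : ℝ :=
  sInf {r : ℝ | ∃ p : Polynomial ℝ, IsPik k p ∧
    r = sSup {s : ℝ | ∃ b : ι → ℝ, euclNorm b = 1 ∧
      s = euclNorm ((Polynomial.aeval A p).mulVec b)}}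

/-- `φ_{k,ℂ,ℝ}(A)`. -/
noncomputable def phiCR {ι : Type*} [Fintype ι] [DecidableEq ι]
    (A : Matrix ι ι ℝ) (k : ℕ) : ℝ :=
  sInf {r : ℝ | ∃ p : Polynomial ℂ, IsPikC k p ∧
    r = sSup {s : ℝ | ∃ b : ι → ℝ, euclNorm b = 1 ∧
      s = euclNormC ((Polynomial.aeval (matC A) p).mulVec (vecC b))}}

/-- `φ_{k,ℝ,ℂ}(A)`. -/
noncomputable def phiRC {ι : Type*} [Fintype ι] [DecidableEq ι]
    (A : Matrix ι ι ℝ) (k : ℕ) : ℝ :=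
  sInf {r : ℝ | ∃ p : Polynomial ℝ, IsPik k p ∧
    r = sSup {s : ℝ | ∃ b : ι → ℂ, euclNormC b = 1 ∧
      s = euclNormC ((Polynomial.aeval (matC A) (p.map (algebraMap ℝ ℂ))).mulVec b)}}

/-- `φ_{k,ℂ,ℂ}(A)`. -/
noncomputable def phiCC {ι : Type*} [Fintype ι] [DecidableEq ι]
    (A : Matrix ι ι ℝ) (k : ℕ) : ℝ :=
  sInf {r : ℝ | ∃ p : Polynomial ℂ, IsPikC k p ∧
    r = sSup {s : ℝ | ∃ b : ι → ℂ, euclNormC b = 1 ∧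
      s = euclNormC ((Polynomial.aeval (matC A) p).mulVec b)}}

/-!
Since `r = p(A) b` has minimal norm among the vectors `q(A) b` with `q ∈ π_k`, it is orthogonal to
all differences `(q - p)(A) b`. Hence `⟨q(A) b, r⟩ = ⟨p(A) b, r⟩ = ‖r‖²` does not depend on `q`.
Moving `q(A)` to the other side of the inner product turns this into `⟨b, q(Aᵀ) r⟩ = ‖r‖²`, whose
case `q = 1` is `⟨b, r⟩ = ‖r‖²`; the inequality is Cauchy–Schwarz.
-/

theorem inner_eq_zero_of_forall_norm_le_norm_add_smul {𝕜 E : Type*} [RCLike 𝕜]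
    [NormedAddCommGroup E] [InnerProductSpace 𝕜 E] {x y : E}
    (h : ∀ t : 𝕜, ‖x‖ ≤ ‖x + t • y‖) : inner 𝕜 x y = 0 := by
  have h_inf : ‖x - 0‖ = ⨅ w : 𝕜 ∙ y, ‖x - w‖ := by
    refine le_antisymm (le_ciInf fun w ↦ ?_)
      (ciInf_le ⟨0, Set.forall_mem_range.2 fun _ ↦ norm_nonneg _⟩ (0 : 𝕜 ∙ y))
    obtain ⟨t, ht⟩ := Submodule.mem_span_singleton.1 w.2
    simpa only [← ht, sub_zero, neg_smul, ← sub_eq_add_neg] using h (-t)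
  simpa only [sub_zero] using ((𝕜 ∙ y).norm_eq_iInf_iff_inner_eq_zero (zero_mem _)).1 h_inf y
    (Submodule.mem_span_singleton_self y)

theorem aeval_transpose {R S ι : Type*} [CommSemiring R] [CommSemiring S] [Algebra R S]
    [Fintype ι] [DecidableEq ι] (A : Matrix ι ι S) (q : R[X]) : aeval Aᵀ q = (aeval A q)ᵀ :=
  MulOpposite.op_injective <| by
    rw [← aeval_op_apply]
    exact (aeval_algHom_apply (transposeAlgEquiv ι R S) A q)

section EuclideanNorm

variable {ι : Type*} [Fintype ι]

theorem euclNorm_eq_norm_toLp (v : ι → ℝ) : euclNorm v = ‖WithLp.toLp 2 v‖ := by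
  simp only [euclNorm, EuclideanSpace.norm_eq, Real.norm_eq_abs, sq_abs]

theorem edot_eq_inner_toLp (u v : ι → ℝ) :
    edot u v = inner ℝ (WithLp.toLp 2 u) (WithLp.toLp 2 v) :=
  dotProduct_comm u v

theorem edot_self (v : ι → ℝ) : edot v v = euclNorm v ^ 2 := by
  rw [edot_eq_inner_toLp, euclNorm_eq_norm_toLp, real_inner_self_eq_norm_sq]

theorem edot_le_euclNorm_mul_euclNorm (u v : ι → ℝ) : edot u v ≤ euclNorm u * euclNorm v := by
  simpa only [edot_eq_inner_toLp, euclNorm_eq_norm_toLp] using real_inner_le_norm _ _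

theorem edot_eq_zero_of_forall_euclNorm_le_euclNorm_add_smul {u v : ι → ℝ}
    (h : ∀ t : ℝ, euclNorm u ≤ euclNorm (u + t • v)) : edot u v = 0 := by
  rw [edot_eq_inner_toLp]
  refine inner_eq_zero_of_forall_norm_le_norm_add_smul fun t ↦ ?_
  simpa only [euclNorm_eq_norm_toLp, WithLp.toLp_add, WithLp.toLp_smul] using h t

theorem edot_transpose_mulVec {κ : Type*} [Fintype κ] (M : Matrix ι κ ℝ) (u : κ → ℝ) (v : ι → ℝ) :
    edot u (Mᵀ *ᵥ v) = edot v (M *ᵥ u) :=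
  dotProduct_transpose_mulVec M u v

end EuclideanNorm

theorem IsPik.one (k : ℕ) : IsPik k 1 :=
  ⟨natDegree_one.trans_le k.zero_le, eval_one⟩

theorem IsPik.add {k : ℕ} {p g : ℝ[X]} (hp : IsPik k p) (hg : g.natDegree ≤ k)
    (hg₀ : g.eval 0 = 0) : IsPik k (p + g) :=
  ⟨natDegree_add_le_of_degree_le hp.1 hg, by rw [eval_add, hp.2, hg₀, add_zero]⟩

namespace IsGmresRes

variable {ι : Type*} [Fintype ι] [DecidableEq ι] {A : Matrix ι ι ℝ} {k : ℕ} {b r : ι → ℝ}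

-- The vectors `g(A) b` in question are exactly those of `A · K_k(A, b)`.
theorem edot_aeval_mulVec_eq_zero (hr : IsGmresRes A k b r) {g : ℝ[X]} (hg : g.natDegree ≤ k)
    (hg₀ : g.eval 0 = 0) : edot r (aeval A g *ᵥ b) = 0 := by
  obtain ⟨p, hp, hrp, hmin⟩ := hr
  refine edot_eq_zero_of_forall_euclNorm_le_euclNorm_add_smul fun t ↦ ?_
  have h_perturbed : aeval A (p + t • g) *ᵥ b = r + t • (aeval A g *ᵥ b) := by
    rw [map_add, map_smul, add_mulVec, smul_mulVec, ← hrp]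
  rw [← h_perturbed]
  exact hmin _ (hp.add ((natDegree_smul_le t g).trans hg) (by rw [eval_smul, hg₀, smul_zero]))

theorem edot_aeval_mulVec_eq_euclNorm_sq (hr : IsGmresRes A k b r) {q : ℝ[X]} (hq : IsPik k q) :
    edot r (aeval A q *ᵥ b) = euclNorm r ^ 2 := by
  have ⟨p, hp, hrp, _⟩ := hr
  have h_orth : edot r (aeval A (q - p) *ᵥ b) = 0 :=
    hr.edot_aeval_mulVec_eq_zero ((natDegree_sub_le_of_le hq.1 hp.1).trans_eq (max_self k))
      (by rw [eval_sub, hq.2, hp.2, sub_self])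
  rw [map_sub, sub_mulVec, ← hrp] at h_orth
  rw [← edot_self]
  exact sub_eq_zero.1 ((dotProduct_sub r _ r).symm.trans h_orth)

theorem edot_aeval_transpose_mulVec_eq_euclNorm_sq (hr : IsGmresRes A k b r) {q : ℝ[X]}
    (hq : IsPik k q) : edot b (aeval Aᵀ q *ᵥ r) = euclNorm r ^ 2 := by
  rw [aeval_transpose, edot_transpose_mulVec, hr.edot_aeval_mulVec_eq_euclNorm_sq hq]

theorem edot_eq_euclNorm_sq (hr : IsGmresRes A k b r) : edot b r = euclNorm r ^ 2 := by
  simpa only [map_one, one_mulVec] using hr.edot_aeval_transpose_mulVec_eq_euclNorm_sq (IsPik.one k)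

end IsGmresRes

theorem gmres_residual_cross_inequality_general {ι : Type*} [Fintype ι] [DecidableEq ι]
    (A : Matrix ι ι ℝ) (k : ℕ) (b r : ι → ℝ) (hr : IsGmresRes A k b r) (q : ℝ[X])
    (hq : IsPik k q) :
    euclNorm r ^ 2 = edot b r ∧
      edot b r = edot b (aeval Aᵀ q *ᵥ r) ∧
      edot b (aeval Aᵀ q *ᵥ r) ≤ euclNorm b * euclNorm (aeval Aᵀ q *ᵥ r) :=
  ⟨hr.edot_eq_euclNorm_sq.symm,
    hr.edot_eq_euclNorm_sq.trans (hr.edot_aeval_transpose_mulVec_eq_euclNorm_sq hq).symm,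
    edot_le_euclNorm_mul_euclNorm b _⟩

/-- If `b` is a unit norm vector with nonzero `k`-th GMRES residual `r`,
then for every `q ∈ π_k`: `‖r‖² = ⟨b,r⟩ = ⟨b, q(Aᵀ)r⟩ ≤ ‖q(Aᵀ)r‖`. -/
theorem gmres_residual_cross_inequality {n : ℕ} (A : Matrix (Fin n) (Fin n) ℝ)
    (hA : IsUnit A) (k : ℕ) (hk1 : 1 ≤ k) (hk2 : k ≤ dA A - 1)
    (b r : Fin n → ℝ) (hb : euclNorm b = 1) (hr : IsGmresRes A k b r) (hr0 : r ≠ 0) :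
    ∀ q : Polynomial ℝ, IsPik k q →
      euclNorm r ^ 2 = edot b r ∧
      edot b r = edot b ((Polynomial.aeval Aᵀ q).mulVec r) ∧
      edot b ((Polynomial.aeval Aᵀ q).mulVec r) ≤ euclNorm ((Polynomial.aeval Aᵀ q).mulVec r) := by
  simpa only [hb, one_mul] using gmres_residual_cross_inequality_general A k b r hr
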